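/- Let θ be a cylindric diagram in C_ω. For every standard tableau T ∈ LE(θ) and every n ≥ 1, the inversion set R(w_{θ,T}[n]) = R₊ ∩ w_{θ,T}[n]·R₋ equals {hk(x) : x ∈ T⁻¹({1,…,n})}. Consequently ⋃_{n≥1} R(w_{θ,T}[n]) = {hk(x) : x ∈ θ} = D(P_θ), which is independent of the choice of T. -/

import Mathlib

/-!
Lift `θ` to a `ω`-periodic order filter of ℤ², with rows `{b ≤ lam a}` and columns `{a ≤ mu b}`
(`Rep`, `exists_rep`). Label row `a` by `lam a - a + 1` and column `b` by `b - mu b`. As in the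
Maya-diagram description of partitions, every integer is the label of exactly one row or column,
the labels are `κ`-periodic, and `(a, b)` is a cell exactly when the label of column `b` is less
than the label of row `a` (`Rep.label_cases`, `Rep.not_congr`, `Rep.mem_iff`).

On the root side, the real roots are `rt u v = α_u + ⋯ + α_{v-1}` (extended antisymmetrically) for
integers `u ≢ v` mod `κ`, the positive ones having `u < v`, and `s_i` acts through the permutation
`sig i` of ℤ swapping `t` and `t + 1` for `t ≡ i` (`sFun_rt`). The hook of `(a, b)` is `rt u v` with
`u` the label of column `b` and `v` the label of row `a` (`hk_eq`).

Removing a minimal cell of content `i` applies `sig i` to all labels (`labels_remove`). Hence after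
removal of the first `n` cells of a tableau the labels are the images of the original ones under
`w[n]⁻¹`. Row labels always decrease and column labels always increase with the index, so an
inversion `u < v` of `w[n]⁻¹` must consist of a column label `u` and a row label `v`, and it
corresponds to a cell of `θ` that has been removed. This is the description of `R(w[n])`
(`invSet_eq`).

Finally, the coefficient of `Λ_t` in `P_θ` is `χ t - χ (t + 1)`, with `χ` the indicator function of
the row labels (`aC_eq`), so `⟨P_θ, (rt u v)^∨⟩ = χ u - χ v`. This is `-1` exactly when `u` is a
column label and `v` a row label, i.e. when `rt u v` is a hook (`hk_image_eq_DSet`).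
-/

namespace CylPaper

/-! ## The cylinder and its order -/

abbrev Z2 : Type := ℤ × ℤ

/-- The partial order on ℤ²: (a,b) ≤ (c,d) iff a ≥ c and b ≥ d. -/
def le2 (x y : Z2) : Prop := y.1 ≤ x.1 ∧ y.2 ≤ x.2

/-- The period ω = (m, -ℓ). -/
def om (m l : ℕ) : Z2 := ((m : ℤ), -(l : ℤ))

/-- The cylinder C_ω = ℤ²/ℤω. -/
abbrev Cyl (m l : ℕ) : Type := Z2 ⧸ AddSubgroup.zmultiples (om m l)

/-- The natural projection π : ℤ² → C_ω. -/
def pr (m l : ℕ) : Z2 →+ Cyl m l := QuotientAddGroup.mk' _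

/-- The induced order relation on the cylinder: x ≤ y iff there are lifts with x̃ ≤ ỹ. -/
def cle (m l : ℕ) (x y : Cyl m l) : Prop :=
  ∃ a b : Z2, pr m l a = x ∧ pr m l b = y ∧ le2 a b

/-- A cylindric diagram: a non-trivial order filter of C_ω. -/
def IsCylindric (m l : ℕ) (θ : Set (Cyl m l)) : Prop :=
  θ.Nonempty ∧ θ ≠ Set.univ ∧ ∀ x ∈ θ, ∀ y, cle m l x y → y ∈ θ

/-- A periodic diagram of period ω: a non-trivial order filter of ℤ² with Θ + ω = Θ. -/
def IsPeriodic (m l : ℕ) (Θ : Set Z2) : Prop :=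
  Θ.Nonempty ∧ Θ ≠ Set.univ ∧ (∀ x ∈ Θ, ∀ y, le2 x y → y ∈ Θ) ∧
    (fun p => p + om m l) '' Θ = Θ

/-- A proper order ideal ξ of the sub-poset θ of C_ω. -/
def IsProperIdealOf (m l : ℕ) (θ ξ : Set (Cyl m l)) : Prop :=
  ξ ⊆ θ ∧ ξ ≠ θ ∧ ∀ x ∈ ξ, ∀ y ∈ θ, cle m l y x → y ∈ ξ

/-- A proper order ideal of the whole cylinder C_ω. -/
def IsProperIdealC (m l : ℕ) (J : Set (Cyl m l)) : Prop :=
  J ≠ Set.univ ∧ ∀ x ∈ J, ∀ y, cle m l y x → y ∈ J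

/-- A proper order filter of the whole cylinder C_ω. -/
def IsProperFilterC (m l : ℕ) (J : Set (Cyl m l)) : Prop :=
  J ≠ Set.univ ∧ ∀ x ∈ J, ∀ y, cle m l x y → y ∈ J

/-! ## The content map -/

/-- The content on ℤ²: (a,b) ↦ b - a mod κ (κ = m + ℓ). -/
def conHom (m l : ℕ) : Z2 →+ ZMod (m + l) where
  toFun p := ((p.2 - p.1 : ℤ) : ZMod (m + l))
  map_zero' := by simp
  map_add' a b := by
    simp only [Prod.fst_add, Prod.snd_add]
    push_cast
    ring

lemma conHom_om (m l : ℕ) : conHom m l (om m l) = 0 := by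
  have h : ((m + l : ℕ) : ZMod (m + l)) = 0 := ZMod.natCast_self _
  show ((((om m l).2 - (om m l).1 : ℤ)) : ZMod (m + l)) = 0
  simp only [om]
  push_cast at h ⊢
  linear_combination -h

/-- The content map con : C_ω → ℤ/κℤ. -/
def con (m l : ℕ) : Cyl m l →+ ZMod (m + l) :=
  QuotientAddGroup.lift _ (conHom m l) (by
    intro x hx
    obtain ⟨k, rfl⟩ := AddSubgroup.mem_zmultiples_iff.mp hx
    simp only [AddMonoidHom.mem_ker, map_zsmul, conHom_om, smul_zero])

/-! ## The affine root system of type A_{κ-1}^{(1)} -/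

/-- h*, with coordinates in the basis {α_i (i ∈ ℤ/κℤ), Λ₀}:
`(c, t)` stands for `Σ_i c_i α_i + t Λ₀`. -/
abbrev Hw (κ : ℕ) : Type := (ZMod κ → ℚ) × ℚ

/-- The affine Cartan matrix of type A_{κ-1}^{(1)} (valid for κ ≥ 2). -/
def cartan (κ : ℕ) (i j : ZMod κ) : ℚ :=
  (if i = j then 2 else 0) + (if i - j = 1 then -1 else 0) + (if i - j = -1 then -1 else 0)

/-- The simple root α_i. -/
def alphaR (κ : ℕ) (i : ZMod κ) : Hw κ := (Pi.single i 1, 0)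

/-- The null root δ = Σ_i α_i. -/
def deltaR (κ : ℕ) : Hw κ := (fun _ => 1, 0)

/-- The pairing ⟨ζ, α_i^∨⟩. -/
noncomputable def pairSimple (κ : ℕ) (ζ : Hw κ) (i : ZMod κ) : ℚ :=
  (∑ᶠ j, ζ.1 j * cartan κ i j) + ζ.2 * (if i = 0 then 1 else 0)

/-- The pairing ⟨ζ, β^∨⟩ where β = Σ_i k_i α_i lies in the root lattice,
so β^∨ = Σ_i k_i α_i^∨. -/
noncomputable def pairCo (κ : ℕ) (ζ β : Hw κ) : ℚ := ∑ᶠ i, β.1 i * pairSimple κ ζ i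

/-- The simple reflection s_i : ζ ↦ ζ - ⟨ζ, α_i^∨⟩ α_i, as a map on h*. -/
noncomputable def sFun (κ : ℕ) (i : ZMod κ) (ζ : Hw κ) : Hw κ :=
  ζ - pairSimple κ ζ i • alphaR κ i

/-- The element s_{i₁} s_{i₂} ⋯ s_{i_r} of the affine Weyl group
given by a word [i₁, i₂, …, i_r]. -/
noncomputable def wordProd (κ : ℕ) (L : List (ZMod κ)) : Hw κ → Hw κ :=
  (L.map (sFun κ)).foldr (· ∘ ·) id

/-- Membership in the affine Weyl group W (generated by the s_i). -/
def Wmem (κ : ℕ) (w : Hw κ → Hw κ) : Prop := ∃ L : List (ZMod κ), wordProd κ L = w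

/-- The Coxeter length: the least r such that w is a product of r simple reflections. -/
noncomputable def len (κ : ℕ) (w : Hw κ → Hw κ) : ℕ :=
  sInf {r : ℕ | ∃ L : List (ZMod κ), L.length = r ∧ wordProd κ L = w}

/-- Q₊ = Σ_i ℤ≥0 α_i. -/
def QPos (κ : ℕ) : Set (Hw κ) := {x | x.2 = 0 ∧ ∀ i, ∃ n : ℕ, x.1 i = (n : ℚ)}

/-- The set R = WΠ of real roots. -/
def Rset (κ : ℕ) : Set (Hw κ) :=
  {β | ∃ (L : List (ZMod κ)) (i : ZMod κ), β = wordProd κ L (alphaR κ i)}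

/-- Positive real roots R₊ = R ∩ Q₊. -/
def Rpos (κ : ℕ) : Set (Hw κ) := Rset κ ∩ QPos κ

/-- Negative real roots R₋ = -R₊. -/
def Rneg (κ : ℕ) : Set (Hw κ) := {β | -β ∈ Rpos κ}

/-- The inversion set R(w) = R₊ ∩ w R₋. -/
def invSet (κ : ℕ) (w : Hw κ → Hw κ) : Set (Hw κ) := Rpos κ ∩ (w '' Rneg κ)

/-- The weak right Bruhat order on W. -/
def wble (κ : ℕ) (v w : Hw κ → Hw κ) : Prop :=
  Relation.ReflTransGen
    (fun u u' => ∃ i : ZMod κ, u' = u ∘ sFun κ i ∧ len κ u' = len κ u + 1) v w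

/-- The weak Bruhat interval [e, w]. -/
def bint (κ : ℕ) (w : Hw κ → Hw κ) : Set (Hw κ → Hw κ) :=
  {x | wble κ id x ∧ wble κ x w}

/-- A single commutation move on words: swap adjacent letters i, j with i - j ≠ 0, ±1. -/
def CommMove (κ : ℕ) (L1 L2 : List (ZMod κ)) : Prop :=
  ∃ (u v : List (ZMod κ)) (i j : ZMod κ),
    i - j ≠ 0 ∧ i - j ≠ 1 ∧ i - j ≠ -1 ∧
    L1 = u ++ i :: j :: v ∧ L2 = u ++ j :: i :: v

/-- A word is reduced if its length equals the Coxeter length of its product. -/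
def IsReducedWord (κ : ℕ) (L : List (ZMod κ)) : Prop :=
  len κ (wordProd κ L) = L.length

/-- Fully commutative: any reduced word for w can be obtained from any other
using only commutation moves. -/
def FullyComm (κ : ℕ) (w : Hw κ → Hw κ) : Prop :=
  ∀ L1 L2 : List (ZMod κ),
    IsReducedWord κ L1 → wordProd κ L1 = w →
    IsReducedWord κ L2 → wordProd κ L2 = w →
    Relation.ReflTransGen (CommMove κ) L1 L2

/-! ## Hooks, bottom set and weights attached to a cylindric diagram -/

/-- α(x) = α_{con(x)}. -/
def alC (m l : ℕ) (x : Cyl m l) : Hw (m + l) := alphaR (m + l) (con m l x)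

/-- arm(x) = {x + π(0,k) : k ≥ 1} ∩ θ. -/
def armSet (m l : ℕ) (θ : Set (Cyl m l)) (x : Cyl m l) : Set (Cyl m l) :=
  {y | y ∈ θ ∧ ∃ k : ℕ, 1 ≤ k ∧ y = x + pr m l (0, (k : ℤ))}

/-- leg(x) = {x + π(k,0) : k ≥ 1} ∩ θ. -/
def legSet (m l : ℕ) (θ : Set (Cyl m l)) (x : Cyl m l) : Set (Cyl m l) :=
  {y | y ∈ θ ∧ ∃ k : ℕ, 1 ≤ k ∧ y = x + pr m l ((k : ℤ), 0)}

/-- The colored hook length hk(x) = α(x) + Σ_{y∈arm(x)} α(y) + Σ_{y∈leg(x)} α(y). -/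
noncomputable def hk (m l : ℕ) (θ : Set (Cyl m l)) (x : Cyl m l) : Hw (m + l) :=
  alC m l x + (∑ᶠ y ∈ armSet m l θ x, alC m l y) + (∑ᶠ y ∈ legSet m l θ x, alC m l y)

/-- x is the minimum cell b_i of content i in θ. -/
def IsBottomCell (m l : ℕ) (θ : Set (Cyl m l)) (i : ZMod (m + l)) (x : Cyl m l) : Prop :=
  x ∈ θ ∧ con m l x = i ∧ ∀ y ∈ θ, con m l y = i → cle m l x y

/-- The bottom set Γ = {b_i : i ∈ ℤ/κℤ}. -/
def btm (m l : ℕ) (θ : Set (Cyl m l)) : Set (Cyl m l) :=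
  {x | ∃ i, IsBottomCell m l θ i x}

/-- The maximal elements Γ_max of the bottom set. -/
def btmMax (m l : ℕ) (θ : Set (Cyl m l)) : Set (Cyl m l) :=
  {x | x ∈ btm m l θ ∧ ∀ y ∈ btm m l θ, cle m l x y → y = x}

/-- The minimal elements Γ_min of the bottom set. -/
def btmMin (m l : ℕ) (θ : Set (Cyl m l)) : Set (Cyl m l) :=
  {x | x ∈ btm m l θ ∧ ∀ y ∈ btm m l θ, cle m l y x → y = x}

open Classical in
/-- The coefficient a_i of Λ_i in the predominant weight P_θ:
1 if b_i ∈ Γ_max, -1 if b_i ∈ Γ_min, 0 otherwise. -/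
noncomputable def aC (m l : ℕ) (θ : Set (Cyl m l)) (i : ZMod (m + l)) : ℚ :=
  if ∃ x, IsBottomCell m l θ i x ∧ x ∈ btmMax m l θ then 1
  else if ∃ x, IsBottomCell m l θ i x ∧ x ∈ btmMin m l θ then -1 else 0

/-- The pairing ⟨P_θ, β^∨⟩ = Σ_i a_i k_i for β = Σ_i k_i α_i,
where P_θ = Σ_i a_i Λ_i (since ⟨Λ_i, α_j^∨⟩ = δ_{ij} and ⟨Λ_i, d⟩ = 0). -/
noncomputable def pairP (m l : ℕ) (θ : Set (Cyl m l)) (β : Hw (m + l)) : ℚ :=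
  ∑ᶠ i, aC m l θ i * β.1 i

/-- D(P_θ) = {α ∈ R₊ : ⟨P_θ, α^∨⟩ = -1}. -/
def DSet (m l : ℕ) (θ : Set (Cyl m l)) : Set (Hw (m + l)) :=
  {β | β ∈ Rpos (m + l) ∧ pairP m l θ β = -1}

/-- The "inversion set" R(w_θ) = {hk(x) : x ∈ θ}. -/
def RwTheta (m l : ℕ) (θ : Set (Cyl m l)) : Set (Hw (m + l)) := hk m l θ '' θ

/-- The set Π_θ = Π_θ^0 ∪ Π_θ^arm ∪ Π_θ^leg. -/
def PiTheta (m l : ℕ) (θ : Set (Cyl m l)) : Set (Hw (m + l)) :=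
  {v | ∃ x, x ∈ btm m l θ ∧ x ∉ btmMax m l θ ∧ x ∉ btmMin m l θ ∧ v = alC m l x} ∪
  {v | ∃ x, x ∈ btmMax m l θ ∧ v = alC m l x + ∑ᶠ y ∈ armSet m l θ x, alC m l y} ∪
  {v | ∃ x, x ∈ btmMax m l θ ∧ v = alC m l x + ∑ᶠ y ∈ legSet m l θ x, alC m l y}

/-- The modified order ⊴ on R(w_θ): α ⊴ β iff β - α ∈ Σ_{γ∈Π_θ} ℤ≥0 γ. -/
def trile (m l : ℕ) (θ : Set (Cyl m l)) (α β : Hw (m + l)) : Prop :=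
  β - α ∈ AddSubmonoid.closure (PiTheta m l θ)

/-! ## Standard tableaux (encoded by the inverse enumeration e = T⁻¹ : ℤ≥1 → θ) -/

/-- A standard tableau on θ, given by the enumeration e = T⁻¹ : {1,2,…} → θ.
This is precisely the data of an order-preserving bijection T : θ → ℤ≥1. -/
def IsTableau (m l : ℕ) (θ : Set (Cyl m l)) (e : ℕ → Cyl m l) : Prop :=
  Set.InjOn e {a : ℕ | 1 ≤ a} ∧ e '' {a : ℕ | 1 ≤ a} = θ ∧
  ∀ a b : ℕ, 1 ≤ a → 1 ≤ b → cle m l (e a) (e b) → e a ≠ e b → a < b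

/-- A standard tableau on a finite (skew) diagram ξ with |ξ| = n, encoded by
the enumeration e = S⁻¹ : {1,…,n} → ξ. -/
def IsTableauOn (m l : ℕ) (ξ : Set (Cyl m l)) (n : ℕ) (e : ℕ → Cyl m l) : Prop :=
  Set.InjOn e (Set.Icc 1 n) ∧ e '' Set.Icc 1 n = ξ ∧
  ∀ a b : ℕ, a ∈ Set.Icc 1 n → b ∈ Set.Icc 1 n → cle m l (e a) (e b) → e a ≠ e b → a < b

/-- The word (con(e 1), con(e 2), …, con(e n)). -/
def tabWord (m l : ℕ) (e : ℕ → Cyl m l) (n : ℕ) : List (ZMod (m + l)) :=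
  (List.range n).map (fun k => con m l (e (k + 1)))

/-- The semi-infinite Bruhat interval [e, w_{θ,T}) = ⋃_{n≥1} [e, w_{θ,T}[n]]. -/
def semiInt (m l : ℕ) (e : ℕ → Cyl m l) : Set (Hw (m + l) → Hw (m + l)) :=
  ⋃ n ∈ {n : ℕ | 1 ≤ n}, bint (m + l) (wordProd (m + l) (tabWord m l e n))

/-- w is P_θ-pluscule: ⟨P_θ, α^∨⟩ = -1 for every α ∈ R(w). -/
def Pluscule (m l : ℕ) (θ : Set (Cyl m l)) (w : Hw (m + l) → Hw (m + l)) : Prop :=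
  ∀ β ∈ invSet (m + l) w, pairP m l θ β = -1

/-- The generating relation of the heap order ⪯_T on ℤ≥1. -/
def heapRel (m l : ℕ) (e : ℕ → Cyl m l) (a b : ℕ) : Prop :=
  1 ≤ a ∧ a ≤ b ∧
    (con m l (e a) = con m l (e b) ∨
      sFun (m + l) (con m l (e a)) ∘ sFun (m + l) (con m l (e b)) ≠
        sFun (m + l) (con m l (e b)) ∘ sFun (m + l) (con m l (e a)))

/-- The generating relation of the heap order ≤^hp on R(w_θ):
α ≤ β whenever β - α ∈ Q₊ (the ordinary order) and ⟨α, β^∨⟩ ≠ 0. -/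
def hpRel (m l : ℕ) (θ : Set (Cyl m l)) (α β : Hw (m + l)) : Prop :=
  α ∈ RwTheta m l θ ∧ β ∈ RwTheta m l θ ∧ β - α ∈ QPos (m + l) ∧
    pairCo (m + l) α β ≠ 0

/-- v is the Weyl group element w_ξ of a proper order ideal ξ of θ. -/
def IsIdealWord (m l : ℕ) (θ ξ : Set (Cyl m l)) (v : Hw (m + l) → Hw (m + l)) : Prop :=
  IsProperIdealOf m l θ ξ ∧
    ∃ n e, IsTableauOn m l ξ n e ∧ v = wordProd (m + l) (tabWord m l e n)

/-- A proper order ideal of the poset (R(w_θ), ⊴). -/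
def IsProperIdealOfRw (m l : ℕ) (θ : Set (Cyl m l)) (J : Set (Hw (m + l))) : Prop :=
  J ⊆ RwTheta m l θ ∧ J ≠ RwTheta m l θ ∧
    ∀ β ∈ J, ∀ α ∈ RwTheta m l θ, trile m l θ α β → α ∈ J


/-! ### Lifting cells of the cylinder to ℤ² -/

lemma pr_eq_iff (m l : ℕ) (a b c d : ℤ) :
    pr m l (a, b) = pr m l (c, d) ↔ ∃ j : ℤ, c = a + j * m ∧ d = b - j * l := by
  have h : pr m l (a, b) = pr m l (c, d) ↔
      -(a, b) + (c, d) ∈ AddSubgroup.zmultiples (om m l) := QuotientAddGroup.eq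
  rw [h, AddSubgroup.mem_zmultiples_iff]
  constructor
  · rintro ⟨j, hj⟩
    simp only [om, Prod.ext_iff] at hj
    simp at hj
    exact ⟨j, by linarith [hj.1], by linarith [hj.2]⟩
  · rintro ⟨j, rfl, rfl⟩
    refine ⟨j, ?_⟩
    simp only [om, Prod.ext_iff]
    simp
    ring

lemma pr_surj (m l : ℕ) (x : Cyl m l) : ∃ a b : ℤ, x = pr m l (a, b) := by
  obtain ⟨⟨a, b⟩, h⟩ := QuotientAddGroup.mk'_surjective (AddSubgroup.zmultiples (om m l)) x
  exact ⟨a, b, h.symm⟩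

lemma pr_shift (m l : ℕ) (a b j : ℤ) : pr m l (a + j * m, b - j * l) = pr m l (a, b) :=
  ((pr_eq_iff m l _ _ _ _).2 ⟨j, rfl, rfl⟩).symm

lemma con_pr (m l : ℕ) (a b : ℤ) : con m l (pr m l (a, b)) = ((b - a : ℤ) : ZMod (m + l)) := rfl

lemma cle_pr_iff (m l : ℕ) (a b c d : ℤ) :
    cle m l (pr m l (a, b)) (pr m l (c, d)) ↔ ∃ j : ℤ, c + j * m ≤ a ∧ d - j * l ≤ b := by
  constructor
  · rintro ⟨⟨a', b'⟩, ⟨c', d'⟩, h1, h2, h3, h4⟩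
    obtain ⟨i, rfl, rfl⟩ := (pr_eq_iff m l _ _ _ _).1 h1
    obtain ⟨j, rfl, rfl⟩ := (pr_eq_iff m l _ _ _ _).1 h2
    refine ⟨i - j, ?_, ?_⟩ <;> simp only at h3 h4 <;> linarith
  · rintro ⟨j, h1, h2⟩
    exact ⟨(a, b), (c + j * m, d - j * l), rfl, pr_shift .., h1, h2⟩

/-- A cell of content `t mod κ` has a lift lying on the diagonal `b - a = t` itself. -/
lemma exists_lift_content (m l : ℕ) (x : Cyl m l) (t : ℤ)
    (h : con m l x = (t : ZMod (m + l))) : ∃ a b : ℤ, x = pr m l (a, b) ∧ b - a = t := by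
  obtain ⟨a, b, rfl⟩ := pr_surj m l x
  rw [con_pr, ZMod.intCast_eq_intCast_iff_dvd_sub] at h
  obtain ⟨j, hj⟩ := h
  refine ⟨a - j * m, b + j * l, ?_, ?_⟩
  · rw [← pr_shift m l a b (-j)]
    congr 2 <;> ring
  · push_cast at hj
    linarith

lemma pr_ne_of_succ {m l : ℕ} (hm : 1 ≤ m) (hl : 1 ≤ l) {a b c d : ℤ} (h : d - c = b - a + 1) :
    pr m l (c, d) ≠ pr m l (a, b) := by
  have : Fact (1 < m + l) := ⟨by omega⟩
  intro he
  have := congrArg (con m l) he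
  rw [con_pr, con_pr, h] at this
  push_cast at this
  simp at this

/-! ### Row and column lengths -/

/-- `Rep m l θ lam mu` says that `lam` and `mu` are the row and column lengths of the lift of `θ`
to ℤ²: row `a` of the lift is `{b ≤ lam a}` and column `b` is `{a ≤ mu b}`. -/
def Rep (m l : ℕ) (θ : Set (Cyl m l)) (lam mu : ℤ → ℤ) : Prop :=
  ∀ a b : ℤ, (pr m l (a, b) ∈ θ ↔ b ≤ lam a) ∧ (pr m l (a, b) ∈ θ ↔ a ≤ mu b)

lemma exists_threshold (P : ℤ → Prop) (h1 : ∃ b, P b) (h2 : ∃ b, ¬ P b)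
    (h3 : ∀ b c, c ≤ b → P b → P c) : ∃ t, ∀ b, P b ↔ b ≤ t := by
  obtain ⟨c, hc⟩ := h2
  obtain ⟨t, ht, ht'⟩ := Int.exists_greatest_of_bdd
    ⟨c, fun z hz => by by_contra hlt; exact hc (h3 z c (by omega) hz)⟩ h1
  exact ⟨t, fun b => ⟨fun h => ht' b h, fun h => h3 t b h ht⟩⟩

lemma IsCylindric.mem_of_le {m l : ℕ} {θ : Set (Cyl m l)} (hθ : IsCylindric m l θ)
    {a b c d : ℤ} (h : pr m l (a, b) ∈ θ) (h1 : c ≤ a) (h2 : d ≤ b) : pr m l (c, d) ∈ θ :=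
  hθ.2.2 _ h _ ((cle_pr_iff ..).2 ⟨0, by simpa using h1, by simpa using h2⟩)

/-- Rows and columns of a cylindric diagram are bounded: translating by multiples of `ω` moves a
cell of `θ`, or of its complement, into comparable position with any given row or column. -/
lemma exists_rep {m l : ℕ} (hm : 1 ≤ m) (hl : 1 ≤ l) {θ : Set (Cyl m l)}
    (hθ : IsCylindric m l θ) : ∃ lam mu, Rep m l θ lam mu := by
  obtain ⟨x, hx⟩ := hθ.1
  obtain ⟨c, d, rfl⟩ := pr_surj m l x
  obtain ⟨y, hy⟩ := (Set.ne_univ_iff_exists_notMem θ).1 hθ.2.1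
  obtain ⟨c', d', rfl⟩ := pr_surj m l y
  have hm' : (1 : ℤ) ≤ m := by exact_mod_cast hm
  have hl' : (1 : ℤ) ≤ l := by exact_mod_cast hl
  have hrow : ∀ a, ∃ t, ∀ b, pr m l (a, b) ∈ θ ↔ b ≤ t := fun a => by
    refine exists_threshold (fun b => pr m l (a, b) ∈ θ) ?_ ?_
      (fun b c hcb h => hθ.mem_of_le h le_rfl hcb)
    · rw [← pr_shift m l c d |a - c|] at hx
      exact ⟨_, hθ.mem_of_le hx (by nlinarith [le_abs_self (a - c), abs_nonneg (a - c)]) le_rfl⟩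
    · rw [← pr_shift m l c' d' (-|a - c'|)] at hy
      exact ⟨_, fun h => hy (hθ.mem_of_le h
        (by nlinarith [neg_abs_le (a - c'), abs_nonneg (a - c')]) le_rfl)⟩
  have hcol : ∀ b, ∃ t, ∀ a, pr m l (a, b) ∈ θ ↔ a ≤ t := fun b => by
    refine exists_threshold (fun a => pr m l (a, b) ∈ θ) ?_ ?_
      (fun b c hcb h => hθ.mem_of_le h hcb le_rfl)
    · rw [← pr_shift m l c d (-|b - d|)] at hx
      exact ⟨_, hθ.mem_of_le hx le_rfl (by nlinarith [le_abs_self (b - d), abs_nonneg (b - d)])⟩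
    · rw [← pr_shift m l c' d' (|b - d'|)] at hy
      exact ⟨_, fun h => hy (hθ.mem_of_le h le_rfl
        (by nlinarith [neg_abs_le (b - d'), abs_nonneg (b - d')]))⟩
  choose lam hlam using hrow
  choose mu hmu using hcol
  exact ⟨lam, mu, fun a b => ⟨hlam a b, hmu b a⟩⟩

section RepLemmas

variable {m l : ℕ} {θ : Set (Cyl m l)} {lam mu : ℤ → ℤ}

lemma Rep.iff (h : Rep m l θ lam mu) (a b : ℤ) : b ≤ lam a ↔ a ≤ mu b :=
  (h a b).1.symm.trans (h a b).2

lemma Rep.lam_anti (h : Rep m l θ lam mu) {a a' : ℤ} (haa : a ≤ a') : lam a' ≤ lam a := by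
  have h1 := (h.iff a' (lam a')).1 le_rfl
  exact (h.iff a (lam a')).2 (by omega)

lemma Rep.mu_anti (h : Rep m l θ lam mu) {b b' : ℤ} (hbb : b ≤ b') : mu b' ≤ mu b := by
  have h1 := (h.iff (mu b') b').2 le_rfl
  exact (h.iff (mu b') b).1 (by omega)

/-- A cell lies in the diagram exactly when its column label is less than its row label. -/
lemma Rep.mem_iff (h : Rep m l θ lam mu) (a b : ℤ) :
    pr m l (a, b) ∈ θ ↔ b - mu b < lam a - a + 1 := by
  have h1 := h.iff a b
  rw [(h a b).1]
  omega

lemma Rep.ne (h : Rep m l θ lam mu) (a b : ℤ) : b - mu b ≠ lam a - a + 1 := by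
  have h1 := h.iff a b
  omega

lemma Rep.lam_shift (h : Rep m l θ lam mu) (a j : ℤ) : lam (a + j * m) = lam a - j * l := by
  have key : ∀ b, b ≤ lam a ↔ b - j * l ≤ lam (a + j * m) := fun b => by
    rw [← (h _ _).1, ← (h _ _).1, pr_shift]
  have h1 := (key (lam a)).1 le_rfl
  have h2 := (key (lam (a + j * m) + j * l)).2 (by linarith)
  linarith

/-- The labels of rows form a set invariant under translation by `κ`, so a row label and a column
label are never congruent modulo `κ`. -/
lemma Rep.not_congr (h : Rep m l θ lam mu) (a b : ℤ) :
    ((b - mu b : ℤ) : ZMod (m + l)) ≠ ((lam a - a + 1 : ℤ) : ZMod (m + l)) := by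
  intro hc
  rw [ZMod.intCast_eq_intCast_iff_dvd_sub] at hc
  obtain ⟨j, hj⟩ := hc
  have h1 := h.ne (a + j * m) b
  rw [h.lam_shift] at h1
  push_cast at hj
  exact h1 (by linarith)

/-- The bottom cell of the diagonal `b - a = t`. -/
lemma Rep.exists_bottom (h : Rep m l θ lam mu) (t : ℤ) :
    ∃ a b : ℤ, b - a = t ∧ pr m l (a, b) ∈ θ ∧ pr m l (a + 1, b + 1) ∉ θ := by
  obtain ⟨k, hk⟩ := exists_threshold (fun k => k + t ≤ lam k)
    ⟨min 0 (lam 0 - t), by have := h.lam_anti (min_le_left 0 (lam 0 - t)); omega⟩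
    ⟨max 0 (lam 0 - t + 1), by have := h.lam_anti (le_max_left 0 (lam 0 - t + 1)); omega⟩
    (fun b c hcb hb => by have := h.lam_anti hcb; omega)
  refine ⟨k, k + t, by ring, (h _ _).1.2 ((hk k).2 le_rfl), fun hn => ?_⟩
  have := (hk (k + 1)).1 (by have := (h _ _).1.1 hn; omega)
  omega

/-- At the bottom cell `(a, b)` of the diagonal `t = b - a`, the integer `t` is the label of row
`a + 1` or of column `b`, according to whether `(a + 1, b)` is in the diagram or not; likewise
`t + 1` is the label of column `b + 1` or of row `a`, according to whether `(a, b + 1)` is. -/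
lemma Rep.bottom_label (h : Rep m l θ lam mu) {a b : ℤ}
    (h1 : pr m l (a, b) ∈ θ) (h2 : pr m l (a + 1, b + 1) ∉ θ) :
    (pr m l (a + 1, b) ∈ θ → lam (a + 1) = b) ∧ (pr m l (a + 1, b) ∉ θ → mu b = a) ∧
    (pr m l (a, b + 1) ∈ θ → mu (b + 1) = a) ∧ (pr m l (a, b + 1) ∉ θ → lam a = b) := by
  have e1 := h a b
  have e2 := h (a + 1) (b + 1)
  have e3 := h (a + 1) b
  have e4 := h a (b + 1)
  grind

/-- Every integer is a row label or a column label. -/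
lemma Rep.label_cases (h : Rep m l θ lam mu) (t : ℤ) :
    (∃ a, t = lam a - a + 1) ∨ (∃ b, t = b - mu b) := by
  obtain ⟨a, b, hab, h1, h2⟩ := h.exists_bottom t
  obtain ⟨h3, h4, -, -⟩ := h.bottom_label h1 h2
  by_cases h5 : pr m l (a + 1, b) ∈ θ
  · exact Or.inl ⟨a + 1, by have := h3 h5; omega⟩
  · exact Or.inr ⟨b, by have := h4 h5; omega⟩

end RepLemmas

/-! ### Roots as differences of an integer-indexed family -/

/-- The partial sums `ε t` of simple roots, normalised up to an additive constant:
`ε (t + 1) - ε t = α_t`. The coefficient of `α_i` is a floor function of `t`. -/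
def eps (κ : ℕ) (t : ℤ) : Hw κ := (fun i => (((t - 1 - (i.val : ℤ)) / (κ : ℤ) : ℤ) : ℚ), 0)

/-- The root `α_u + ⋯ + α_{v-1}` attached to integers `u < v`, extended antisymmetrically. -/
def rt (κ : ℕ) (u v : ℤ) : Hw κ := eps κ v - eps κ u

lemma eps_succ (κ : ℕ) [NeZero κ] (t : ℤ) :
    eps κ (t + 1) = eps κ t + alphaR κ (t : ZMod κ) := by
  have hκ : (0 : ℤ) < κ := by exact_mod_cast Nat.pos_of_ne_zero (NeZero.ne κ)
  ext i
  · simp only [eps, alphaR, Prod.fst_add, Pi.add_apply, Pi.single_apply]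
    have hi : i = (t : ZMod κ) ↔ (κ : ℤ) ∣ t - i.val := by
      rw [← ZMod.intCast_eq_intCast_iff_dvd_sub]
      simp
    have e : (t + 1 - 1 - (i.val : ℤ)) / (κ : ℤ) =
        (t - 1 - i.val) / κ + if (κ : ℤ) ∣ t - i.val then 1 else 0 := by
      rw [add_sub_cancel_right, show t - 1 - (i.val : ℤ) = t - i.val - 1 by ring]
      generalize t - (i.val : ℤ) = d
      split_ifs with hd
      · obtain ⟨c, rfl⟩ := hd
        rw [Int.mul_ediv_cancel_left _ hκ.ne',
          ((Int.ediv_emod_unique (a := κ * c - 1) (q := c - 1) (r := κ - 1) hκ).2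
            ⟨by ring, by omega, by omega⟩).1]
        ring
      · have h0 := Int.emod_nonneg d hκ.ne'
        have h1 : d % κ ≠ 0 := fun h => hd (Int.dvd_of_emod_eq_zero h)
        have h2 := Int.emod_lt_of_pos d hκ
        have h3 := Int.emod_add_mul_ediv d κ
        rw [((Int.ediv_emod_unique (a := d - 1) (q := d / κ) (r := d % κ - 1) hκ).2
            ⟨by linarith, by omega, by omega⟩).1]
        ring
    rw [e]
    split_ifs <;> simp_all
  · simp [eps, alphaR]

lemma eps_pred (κ : ℕ) [NeZero κ] (t : ℤ) :
    eps κ (t - 1) = eps κ t - alphaR κ ((t : ZMod κ) - 1) := by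
  have := eps_succ κ (t - 1)
  rw [sub_add_cancel] at this
  rw [this]
  push_cast
  abel

lemma eps_mono (κ : ℕ) [NeZero κ] {u v : ℤ} (h : u ≤ v) (i : ZMod κ) :
    (u - 1 - (i.val : ℤ)) / (κ : ℤ) ≤ (v - 1 - (i.val : ℤ)) / (κ : ℤ) :=
  Int.ediv_le_ediv (by exact_mod_cast Nat.pos_of_ne_zero (NeZero.ne κ)) (by omega)

lemma rt_mem_QPos (κ : ℕ) [NeZero κ] {u v : ℤ} (h : u ≤ v) : rt κ u v ∈ QPos κ := by
  refine ⟨by simp [rt, eps], fun i => ?_⟩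
  obtain ⟨n, hn⟩ := Int.eq_ofNat_of_zero_le (sub_nonneg.2 (eps_mono κ h i))
  refine ⟨n, ?_⟩
  simp only [rt, eps, Prod.fst_sub, Pi.sub_apply]
  exact_mod_cast hn

lemma rt_notMem_QPos (κ : ℕ) [NeZero κ] {u v : ℤ} (h : v < u) : rt κ u v ∉ QPos κ := by
  rintro ⟨-, hp⟩
  obtain ⟨n, hn⟩ := hp (v : ZMod κ)
  -- the coefficient of `α_v` already drops between `v + 1` and `v`
  have h1 := eps_mono κ (show v + 1 ≤ u by omega) (v : ZMod κ)
  have h2 := congrArg (fun z => z.1 (v : ZMod κ)) (eps_succ κ v)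
  simp only [rt, eps, Prod.fst_sub, Pi.sub_apply, Prod.fst_add, Pi.add_apply, alphaR,
    Pi.single_eq_same] at hn h2
  have h3 : (((v + 1 - 1 - ((v : ZMod κ).val : ℤ)) / (κ : ℤ) : ℤ) : ℚ) ≤
    (((u - 1 - ((v : ZMod κ).val : ℤ)) / (κ : ℤ) : ℤ) : ℚ) := by exact_mod_cast h1
  have h4 : (0 : ℚ) ≤ n := n.cast_nonneg
  linarith

lemma rt_neg (κ : ℕ) (u v : ℤ) : -rt κ u v = rt κ v u := by simp [rt]

/-! ### The action of the Weyl group on integers -/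

/-- The simple reflection `s_i` acting on ℤ: it swaps `t` and `t + 1` for every `t ≡ i`. -/
def sig (κ : ℕ) (i : ZMod κ) (t : ℤ) : ℤ :=
  if (t : ZMod κ) = i then t + 1 else if (t : ZMod κ) = i + 1 then t - 1 else t

lemma sig_sig (κ : ℕ) (hκ : 2 ≤ κ) (i : ZMod κ) (t : ℤ) : sig κ i (sig κ i t) = t := by
  have : Fact (1 < κ) := ⟨hκ⟩
  have h1 : i + 1 ≠ i := by simp
  unfold sig
  by_cases h : (t : ZMod κ) = i
  · simp [h]
  · by_cases h' : (t : ZMod κ) = i + 1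
    · simp [h']
    · simp [h, h']

lemma pairSimple_eq (κ : ℕ) [NeZero κ] (ζ : Hw κ) (i : ZMod κ) :
    pairSimple κ ζ i = (∑ j, ζ.1 j * cartan κ i j) + ζ.2 * (if i = 0 then 1 else 0) := by
  rw [pairSimple, finsum_eq_sum_of_fintype]

lemma pairSimple_add (κ : ℕ) [NeZero κ] (x y : Hw κ) (i : ZMod κ) :
    pairSimple κ (x + y) i = pairSimple κ x i + pairSimple κ y i := by
  simp only [pairSimple_eq, Prod.fst_add, Prod.snd_add, Pi.add_apply, add_mul,
    Finset.sum_add_distrib]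
  ring

lemma pairSimple_alpha (κ : ℕ) [NeZero κ] (i j : ZMod κ) :
    pairSimple κ (alphaR κ j) i = cartan κ i j := by
  simp [pairSimple_eq, alphaR, Pi.single_apply]

lemma sFun_add (κ : ℕ) [NeZero κ] (x y : Hw κ) (i : ZMod κ) :
    sFun κ i (x + y) = sFun κ i x + sFun κ i y := by
  simp only [sFun, pairSimple_add, add_smul]
  abel

lemma sFun_sub (κ : ℕ) [NeZero κ] (x y : Hw κ) (i : ZMod κ) :
    sFun κ i (x - y) = sFun κ i x - sFun κ i y := by
  rw [eq_sub_iff_add_eq, ← sFun_add, sub_add_cancel]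

/-- Up to a constant independent of `t`, `⟨ε t, α_i^∨⟩` is `[t ≡ i + 1] - [t ≡ i]`. -/
lemma pairSimple_eps (κ : ℕ) [NeZero κ] (i : ZMod κ) (t : ℤ) :
    pairSimple κ (eps κ t) i =
      ((if (t : ZMod κ) = i + 1 then 1 else 0) - (if (t : ZMod κ) = i then 1 else 0)) +
      (pairSimple κ (eps κ 0) i -
        ((if ((0 : ℤ) : ZMod κ) = i + 1 then 1 else 0) -
          (if ((0 : ℤ) : ZMod κ) = i then 1 else 0))) := by
  have step : ∀ t : ℤ, pairSimple κ (eps κ (t + 1)) i -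
      ((if ((t + 1 : ℤ) : ZMod κ) = i + 1 then 1 else 0) -
        (if ((t + 1 : ℤ) : ZMod κ) = i then 1 else 0)) =
      pairSimple κ (eps κ t) i -
      ((if (t : ZMod κ) = i + 1 then 1 else 0) - (if (t : ZMod κ) = i then 1 else 0)) := by
    intro t
    have e1 : ((t + 1 : ℤ) : ZMod κ) = i + 1 ↔ i = (t : ZMod κ) := by
      push_cast
      rw [add_left_inj, eq_comm]
    have e2 : ((t + 1 : ℤ) : ZMod κ) = i ↔ i - (t : ZMod κ) = 1 := by
      push_cast
      rw [sub_eq_iff_eq_add, add_comm, eq_comm]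
    have e3 : (t : ZMod κ) = i + 1 ↔ i - (t : ZMod κ) = -1 := by
      constructor <;> intro h
      · rw [h]; ring
      · linear_combination -h
    rw [eps_succ, pairSimple_add, pairSimple_alpha, cartan]
    simp only [e1, e2, e3, eq_comm (a := (t : ZMod κ)) (b := i)]
    split_ifs <;> ring
  induction t using Int.induction_on with
  | zero => ring
  | succ n ih => linarith [step n]
  | pred n ih =>
    have := step (-(n : ℤ) - 1)
    rw [sub_add_cancel] at this
    linarith

lemma eps_sig (κ : ℕ) [NeZero κ] (hκ : 2 ≤ κ) (i : ZMod κ) (t : ℤ) :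
    eps κ (sig κ i t) = eps κ t -
      (((if (t : ZMod κ) = i + 1 then 1 else 0) - (if (t : ZMod κ) = i then 1 else 0) : ℚ)) •
        alphaR κ i := by
  have : Fact (1 < κ) := ⟨hκ⟩
  unfold sig
  by_cases h : (t : ZMod κ) = i
  · simp [h, eps_succ]
  · by_cases h' : (t : ZMod κ) = i + 1
    · simp [h', eps_pred]
    · simp [h, h']

lemma sFun_rt (κ : ℕ) [NeZero κ] (hκ : 2 ≤ κ) (i : ZMod κ) (u v : ℤ) :
    sFun κ i (rt κ u v) = rt κ (sig κ i u) (sig κ i v) := by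
  rw [rt, sFun_sub, rt, eps_sig κ hκ, eps_sig κ hκ, sFun, sFun, pairSimple_eps κ i v,
    pairSimple_eps κ i u]
  module

lemma rt_succ (κ : ℕ) [NeZero κ] (u : ℤ) : rt κ u (u + 1) = alphaR κ (u : ZMod κ) := by
  simp [rt, eps_succ]

lemma wordProd_cons (κ : ℕ) (i : ZMod κ) (L : List (ZMod κ)) (x : Hw κ) :
    wordProd κ (i :: L) x = sFun κ i (wordProd κ L x) := rfl

lemma wordProd_append (κ : ℕ) (L M : List (ZMod κ)) (x : Hw κ) :
    wordProd κ (L ++ M) x = wordProd κ L (wordProd κ M x) := by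
  induction L with
  | nil => rfl
  | cons i L ih => rw [List.cons_append, wordProd_cons, ih, wordProd_cons]

lemma exists_rt_of_mem_Rset (κ : ℕ) [NeZero κ] (hκ : 2 ≤ κ) {β : Hw κ} (h : β ∈ Rset κ) :
    ∃ u v : ℤ, u ≠ v ∧ β = rt κ u v := by
  obtain ⟨L, i, rfl⟩ := h
  induction L with
  | nil =>
    refine ⟨i.val, i.val + 1, by omega, ?_⟩
    rw [rt_succ]
    simp [wordProd]
  | cons j L ih =>
    obtain ⟨u, v, huv, h⟩ := ih
    refine ⟨_, _, fun hs => huv ?_, by rw [wordProd_cons, h, sFun_rt κ hκ]⟩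
    rw [← sig_sig κ hκ j u, hs, sig_sig κ hκ]

lemma exists_rt_of_mem_Rpos (κ : ℕ) [NeZero κ] (hκ : 2 ≤ κ) {β : Hw κ} (h : β ∈ Rpos κ) :
    ∃ u v : ℤ, u < v ∧ β = rt κ u v := by
  obtain ⟨u, v, huv, rfl⟩ := exists_rt_of_mem_Rset κ hκ h.1
  exact ⟨u, v, by by_contra hlt; exact rt_notMem_QPos κ (by omega) h.2, rfl⟩

lemma Rset_of_sFun (κ : ℕ) (i : ZMod κ) {β : Hw κ} (h : β ∈ Rset κ) : sFun κ i β ∈ Rset κ := by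
  obtain ⟨L, j, rfl⟩ := h
  exact ⟨i :: L, j, rfl⟩

/-- `rt u v` with `u < v` incongruent is a real root: a simple reflection shortens `v - u`, by
moving only `u`, or, when `v ≡ u + 1`, by moving both ends inwards. -/
lemma rt_mem_Rset (κ : ℕ) [NeZero κ] (hκ : 2 ≤ κ) (n : ℕ) : ∀ u v : ℤ, v - u = n → u < v →
    (u : ZMod κ) ≠ (v : ZMod κ) → rt κ u v ∈ Rset κ := by
  have : Fact (1 < κ) := ⟨hκ⟩
  induction n using Nat.strong_induction_on with
  | _ n ih =>
    intro u v hn huv hc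
    by_cases h1 : v = u + 1
    · subst h1
      exact ⟨[], (u : ZMod κ), rt_succ κ u⟩
    by_cases h2 : (v : ZMod κ) = (u : ZMod κ) + 1
    · have h3 : v ≠ u + 2 := by
        rintro rfl
        push_cast at h2
        have : (1 : ZMod κ) = 0 := by linear_combination h2
        simp at this
      have e1 : sig κ (u : ZMod κ) (u + 1) = u := by simp [sig]
      have e2 : sig κ (u : ZMod κ) (v - 1) = v := by simp [sig, h2]
      have h4 := ih (n - 2) (by omega) (u + 1) (v - 1) (by omega) (by omega)
        (by push_cast; rw [h2]; simp)
      have h5 := Rset_of_sFun κ (u : ZMod κ) h4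
      rwa [sFun_rt κ hκ, e1, e2] at h5
    · have e1 : sig κ (u : ZMod κ) (u + 1) = u := by simp [sig]
      have e2 : sig κ (u : ZMod κ) v = v := by simp [sig, h2, hc.symm]
      have h4 := ih (n - 1) (by omega) (u + 1) v (by omega) (by omega)
        (by push_cast; exact fun h => h2 h.symm)
      have h5 := Rset_of_sFun κ (u : ZMod κ) h4
      rwa [sFun_rt κ hκ, e1, e2] at h5

lemma rt_mem_Rpos (κ : ℕ) [NeZero κ] (hκ : 2 ≤ κ) {u v : ℤ} (h : u < v)
    (hc : (u : ZMod κ) ≠ (v : ZMod κ)) : rt κ u v ∈ Rpos κ :=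
  ⟨rt_mem_Rset κ hκ (v - u).toNat u v (by omega) h hc, rt_mem_QPos κ h.le⟩

/-! ### Hooks -/

lemma sum_arm (κ : ℕ) [NeZero κ] (c : ℤ) (N : ℕ) :
    ∑ k ∈ Finset.Icc 1 N, alphaR κ ((c + k : ℤ) : ZMod κ) = eps κ (c + N + 1) - eps κ (c + 1) := by
  induction N with
  | zero => simp
  | succ N ih =>
    rw [Finset.sum_Icc_succ_top (by omega), ih]
    have := eps_succ κ (c + N + 1)
    push_cast at this ⊢
    rw [← add_assoc, ← add_assoc, this]
    abel

lemma sum_leg (κ : ℕ) [NeZero κ] (c : ℤ) (N : ℕ) :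
    ∑ k ∈ Finset.Icc 1 N, alphaR κ ((c - k : ℤ) : ZMod κ) = eps κ c - eps κ (c - N) := by
  induction N with
  | zero => simp
  | succ N ih =>
    rw [Finset.sum_Icc_succ_top (by omega), ih]
    have := eps_succ κ (c - (N + 1 : ℕ))
    rw [show c - ((N + 1 : ℕ) : ℤ) + 1 = c - N by push_cast; ring] at this
    rw [this]
    abel

lemma hk_eq {m l : ℕ} (hm : 1 ≤ m) (hl : 1 ≤ l) {θ : Set (Cyl m l)} {lam mu : ℤ → ℤ}
    (h : Rep m l θ lam mu) {a b : ℤ} (hab : pr m l (a, b) ∈ θ) :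
    hk m l θ (pr m l (a, b)) = rt (m + l) (b - mu b) (lam a - a + 1) := by
  have : NeZero (m + l) := ⟨by omega⟩
  have h1 := (h a b).1.1 hab
  have h2 := (h a b).2.1 hab
  have harm : armSet m l θ (pr m l (a, b)) = (fun k : ℕ => pr m l (a, b + k)) ''
      (Finset.Icc 1 (lam a - b).toNat : Finset ℕ) := by
    ext y
    simp only [armSet, Set.mem_ofPred_eq, ← map_add, Prod.mk_add_mk, add_zero, Set.mem_image,
      Finset.coe_Icc, Set.mem_Icc]
    constructor
    · rintro ⟨hy, k, hk1, rfl⟩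
      have := (h _ _).1.1 hy
      exact ⟨k, ⟨hk1, by omega⟩, rfl⟩
    · rintro ⟨k, ⟨hk1, hk2⟩, rfl⟩
      exact ⟨(h _ _).1.2 (by omega), k, hk1, rfl⟩
  have hleg : legSet m l θ (pr m l (a, b)) = (fun k : ℕ => pr m l (a + k, b)) ''
      (Finset.Icc 1 (mu b - a).toNat : Finset ℕ) := by
    ext y
    simp only [legSet, Set.mem_ofPred_eq, ← map_add, Prod.mk_add_mk, add_zero, Set.mem_image,
      Finset.coe_Icc, Set.mem_Icc]
    constructor
    · rintro ⟨hy, k, hk1, rfl⟩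
      have := (h _ _).2.1 hy
      exact ⟨k, ⟨hk1, by omega⟩, rfl⟩
    · rintro ⟨k, ⟨hk1, hk2⟩, rfl⟩
      exact ⟨(h _ _).2.2 (by omega), k, hk1, rfl⟩
  have sarm : ∑ᶠ y ∈ armSet m l θ (pr m l (a, b)), alC m l y =
      eps (m + l) (lam a - a + 1) - eps (m + l) (b - a + 1) := by
    rw [harm, finsum_mem_image, finsum_mem_coe_finset]
    · have := sum_arm (m + l) (b - a) (lam a - b).toNat
      rw [show b - a + ((lam a - b).toNat : ℤ) + 1 = lam a - a + 1 by omega] at this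
      rw [← this]
      refine Finset.sum_congr rfl fun k _ => ?_
      rw [alC, con_pr]
      congr 2
      ring
    · intro k _ k' _ hkk
      obtain ⟨j, hj1, hj2⟩ := (pr_eq_iff ..).1 hkk
      have : j = 0 := by
        have : j * (m : ℤ) = 0 := by linarith
        rcases mul_eq_zero.1 this with h | h <;> omega
      subst this
      omega
  have sleg : ∑ᶠ y ∈ legSet m l θ (pr m l (a, b)), alC m l y =
      eps (m + l) (b - a) - eps (m + l) (b - mu b) := by
    rw [hleg, finsum_mem_image, finsum_mem_coe_finset]
    · have := sum_leg (m + l) (b - a) (mu b - a).toNat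
      rw [show b - a - ((mu b - a).toNat : ℤ) = b - mu b by omega] at this
      rw [← this]
      refine Finset.sum_congr rfl fun k _ => ?_
      rw [alC, con_pr]
      congr 2
      ring
    · intro k _ k' _ hkk
      obtain ⟨j, hj1, hj2⟩ := (pr_eq_iff ..).1 hkk
      have : j = 0 := by
        have : j * (l : ℤ) = 0 := by linarith
        rcases mul_eq_zero.1 this with h | h <;> omega
      subst this
      omega
  rw [hk, sarm, sleg, alC, con_pr, rt, eps_succ (m + l) (b - a)]
  abel

/-! ### Removing a minimal cell -/

/-- Removing a minimal cell `x` of content `i` applies `s_i` to all row and column labels. -/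
lemma labels_remove {m l : ℕ} (hm : 1 ≤ m) (hl : 1 ≤ l) {θ θ' : Set (Cyl m l)} {x : Cyl m l}
    (hx : x ∈ θ) (hθ : IsCylindric m l θ') (hdiff : θ' = θ \ {x}) {lam mu lam' mu' : ℤ → ℤ}
    (h : Rep m l θ lam mu) (h' : Rep m l θ' lam' mu') :
    (∀ a, lam' a - a + 1 = sig (m + l) (con m l x) (lam a - a + 1)) ∧
    (∀ b, b - mu' b = sig (m + l) (con m l x) (b - mu b)) := by
  have : Fact (1 < m + l) := ⟨by omega⟩
  have hne : ∀ c : ZMod (m + l), c + 1 ≠ c := fun c => by simp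
  have mem' : ∀ a b, pr m l (a, b) ∈ θ' ↔ pr m l (a, b) ∈ θ ∧ pr m l (a, b) ≠ x := by
    intro a b
    rw [hdiff]
    rfl
  -- the cells next to `x` on the right and below are not in `θ`
  have hmin : ∀ a b, pr m l (a, b) = x → lam a = b ∧ mu b = a := by
    intro a b hab
    have n1 : pr m l (a, b + 1) ∉ θ := by
      intro hin
      have hin' : pr m l (a, b + 1) ∈ θ' := (mem' _ _).2 ⟨hin, fun he =>
        pr_ne_of_succ hm hl (show b + 1 - a = b - a + 1 by ring) (he.trans hab.symm)⟩
      exact ((mem' _ _).1 (hθ.mem_of_le hin' le_rfl (show b ≤ b + 1 by omega))).2 hab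
    have n2 : pr m l (a + 1, b) ∉ θ := by
      intro hin
      have hin' : pr m l (a + 1, b) ∈ θ' := (mem' _ _).2 ⟨hin, fun he =>
        pr_ne_of_succ hm hl (show b - a = b - (a + 1) + 1 by ring) (hab.trans he.symm)⟩
      exact ((mem' _ _).1 (hθ.mem_of_le hin' (show a ≤ a + 1 by omega) le_rfl)).2 hab
    have n3 : pr m l (a, b) ∈ θ := hab ▸ hx
    rw [(h _ _).1] at n1
    rw [(h _ _).2] at n2
    have := (h _ _).1.1 n3
    have := (h _ _).2.1 n3
    omega
  have hlift := exists_lift_content m l x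
  constructor
  · intro a
    have hle : ∀ b, b ≤ lam' a ↔ b ≤ lam a ∧ pr m l (a, b) ≠ x := fun b => by
      rw [← (h' _ _).1, mem', (h _ _).1]
    unfold sig
    by_cases hax : pr m l (a, lam a) = x
    · have hc : ((lam a - a + 1 : ℤ) : ZMod (m + l)) = con m l x + 1 := by
        rw [← hax, con_pr]
        push_cast
        ring
      rw [if_neg (by rw [hc]; exact hne _), if_pos hc]
      have h1 := (hle (lam a)).not.2 (by simp [hax])
      have h2 := (hle (lam a - 1)).2 ⟨by omega, fun he => by have := (hmin _ _ he).1; omega⟩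
      omega
    · have heq : lam' a = lam a := by
        have h1 := (hle (lam a)).2 ⟨le_rfl, hax⟩
        have h2 := ((hle (lam' a)).1 le_rfl).1
        omega
      rw [if_neg, if_neg, heq]
      · intro hc
        obtain ⟨c, d, hcd, ht⟩ := hlift (lam a - a) (by
          push_cast at hc ⊢
          linear_combination -hc)
        have h3 := hmin c d hcd.symm
        have : a = c := by
          rcases lt_trichotomy a c with hlt | he | hlt
          · have := h.lam_anti hlt.le
            omega
          · exact he
          · have := h.lam_anti hlt.le
            omega
        subst this
        exact hax (by rw [h3.1]; exact hcd.symm)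
      · intro hc
        obtain ⟨c, d, hcd, ht⟩ := hlift (lam a - a + 1) hc.symm
        have h3 := hmin c d hcd.symm
        rcases lt_or_ge c a with hlt | hle'
        · have := (h.iff a (lam a)).1 le_rfl
          have := h.mu_anti (show d ≤ lam a by omega)
          omega
        · have := h.lam_anti hle'
          omega
  · intro b
    have hle : ∀ a, a ≤ mu' b ↔ a ≤ mu b ∧ pr m l (a, b) ≠ x := fun a => by
      rw [← (h' _ _).2, mem', (h _ _).2]
    unfold sig
    by_cases hax : pr m l (mu b, b) = x
    · have hc : ((b - mu b : ℤ) : ZMod (m + l)) = con m l x := by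
        rw [← hax, con_pr]
      rw [if_pos hc]
      have h1 := (hle (mu b)).not.2 (by simp [hax])
      have h2 := (hle (mu b - 1)).2 ⟨by omega, fun he => by have := (hmin _ _ he).2; omega⟩
      omega
    · have heq : mu' b = mu b := by
        have h1 := (hle (mu b)).2 ⟨le_rfl, hax⟩
        have h2 := ((hle (mu' b)).1 le_rfl).1
        omega
      rw [if_neg, if_neg, heq]
      · intro hc
        obtain ⟨c, d, hcd, ht⟩ := hlift (b - mu b - 1) (by
          push_cast at hc ⊢
          linear_combination -hc)
        have h3 := hmin c d hcd.symm
        rcases lt_or_ge d b with hlt | hle'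
        · have := (h.iff (mu b) b).2 le_rfl
          have := h.lam_anti (show c ≤ mu b by omega)
          omega
        · have := h.mu_anti hle'
          omega
      · intro hc
        obtain ⟨c, d, hcd, ht⟩ := hlift (b - mu b) hc.symm
        have h3 := hmin c d hcd.symm
        have : b = d := by
          rcases lt_trichotomy b d with hlt | he | hlt
          · have := h.mu_anti hlt.le
            omega
          · exact he
          · have := h.mu_anti hlt.le
            omega
        subst this
        exact hax (by rw [h3.2]; exact hcd.symm)

/-! ### Inversion sets along a tableau -/

/-- What remains of `θ` after the cells `e 1, …, e n` have been removed. -/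
def remain (m l : ℕ) (θ : Set (Cyl m l)) (e : ℕ → Cyl m l) (n : ℕ) : Set (Cyl m l) :=
  θ \ (e '' Set.Icc 1 n)

lemma IsTableau.mem {m l : ℕ} {θ : Set (Cyl m l)} {e : ℕ → Cyl m l} (he : IsTableau m l θ e)
    {n : ℕ} (hn : 1 ≤ n) : e n ∈ θ := he.2.1 ▸ ⟨n, hn, rfl⟩

lemma IsTableau.mem_remain {m l : ℕ} {θ : Set (Cyl m l)} {e : ℕ → Cyl m l}
    (he : IsTableau m l θ e) (n : ℕ) : e (n + 1) ∈ remain m l θ e n := by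
  refine ⟨he.mem (by omega), ?_⟩
  rintro ⟨k, ⟨hk1, hk2⟩, hk⟩
  have := he.1 hk1 (show 1 ≤ n + 1 by omega) hk
  omega

lemma remain_cylindric {m l : ℕ} {θ : Set (Cyl m l)} (hθ : IsCylindric m l θ)
    {e : ℕ → Cyl m l} (he : IsTableau m l θ e) (n : ℕ) :
    IsCylindric m l (remain m l θ e n) := by
  refine ⟨⟨_, he.mem_remain n⟩, ?_, ?_⟩
  · intro h
    apply hθ.2.1
    rw [Set.eq_univ_iff_forall] at h ⊢
    exact fun x => (h x).1
  · rintro x ⟨hx1, hx2⟩ y hxy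
    refine ⟨hθ.2.2 x hx1 y hxy, ?_⟩
    rintro ⟨k, ⟨hk1, hk2⟩, rfl⟩
    rw [← he.2.1] at hx1
    obtain ⟨j, hj, rfl⟩ := hx1
    by_cases hjk : e j = e k
    · exact hx2 ⟨k, ⟨hk1, hk2⟩, hjk.symm⟩
    · have := he.2.2 j k hj hk1 hxy hjk
      exact hx2 ⟨j, ⟨hj, by omega⟩, rfl⟩

lemma remain_succ {m l : ℕ} {θ : Set (Cyl m l)} {e : ℕ → Cyl m l} (n : ℕ) :
    remain m l θ e (n + 1) = remain m l θ e n \ {e (n + 1)} := by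
  ext x
  simp only [remain, Set.mem_sdiff, Set.mem_image, Set.mem_Icc, Set.mem_singleton_iff, and_assoc]
  refine and_congr_right fun _ => ⟨fun h => ⟨?_, ?_⟩, ?_⟩
  · rintro ⟨k, h1, h2, h3⟩
    exact h ⟨k, h1, by omega, h3⟩
  · rintro rfl
    exact h ⟨n + 1, by omega, le_rfl, rfl⟩
  · rintro ⟨h1, h2⟩ ⟨k, h3, h4, rfl⟩
    rcases Nat.lt_or_ge n k with h5 | h5
    · exact h2 (by rw [show k = n + 1 by omega])
    · exact h1 ⟨k, h3, h5, rfl⟩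

/-- The inverse of `w_{θ,T}[n]`, acting on ℤ. -/
def winv (m l : ℕ) (e : ℕ → Cyl m l) : ℕ → ℤ → ℤ
  | 0 => id
  | n + 1 => fun t => sig (m + l) (con m l (e (n + 1))) (winv m l e n t)

lemma winv_surj {m l : ℕ} (hκ : 2 ≤ m + l) (e : ℕ → Cyl m l) (n : ℕ) (t : ℤ) :
    ∃ s, winv m l e n s = t := by
  induction n generalizing t with
  | zero => exact ⟨t, rfl⟩
  | succ n ih =>
    obtain ⟨s, hs⟩ := ih (sig (m + l) (con m l (e (n + 1))) t)
    refine ⟨s, ?_⟩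
    simp only [winv]
    rw [hs, sig_sig _ hκ]

lemma tabWord_succ (m l : ℕ) (e : ℕ → Cyl m l) (n : ℕ) :
    tabWord m l e (n + 1) = tabWord m l e n ++ [con m l (e (n + 1))] := by
  simp [tabWord, List.range_succ]

lemma wordProd_winv {m l : ℕ} [NeZero (m + l)] (hκ : 2 ≤ m + l) (e : ℕ → Cyl m l) (n : ℕ)
    (u v : ℤ) : wordProd (m + l) (tabWord m l e n)
      (rt (m + l) (winv m l e n u) (winv m l e n v)) = rt (m + l) u v := by
  induction n with
  | zero => rfl
  | succ n ih =>
    rw [tabWord_succ, wordProd_append, wordProd_cons, winv]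
    change wordProd _ _ (sFun _ _ (rt _ _ _)) = _
    rw [sFun_rt _ hκ, sig_sig _ hκ, sig_sig _ hκ, ih]

lemma exists_rep_remain {m l : ℕ} (hm : 1 ≤ m) (hl : 1 ≤ l) {θ : Set (Cyl m l)}
    (hθ : IsCylindric m l θ) {e : ℕ → Cyl m l} (he : IsTableau m l θ e) {lam mu : ℤ → ℤ}
    (h : Rep m l θ lam mu) (n : ℕ) :
    ∃ lam' mu' : ℤ → ℤ, Rep m l (remain m l θ e n) lam' mu' ∧
      (∀ a, lam' a - a + 1 = winv m l e n (lam a - a + 1)) ∧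
      (∀ b, b - mu' b = winv m l e n (b - mu b)) := by
  induction n with
  | zero =>
    refine ⟨lam, mu, ?_, fun _ => rfl, fun _ => rfl⟩
    simpa [remain] using h
  | succ n ih =>
    obtain ⟨lam1, mu1, h1, h2, h3⟩ := ih
    obtain ⟨lam2, mu2, h4⟩ := exists_rep hm hl (remain_cylindric hθ he (n + 1))
    obtain ⟨h5, h6⟩ := labels_remove hm hl (he.mem_remain n) (remain_cylindric hθ he (n + 1))
      (remain_succ n) h1 h4
    exact ⟨lam2, mu2, h4, fun a => by rw [h5, h2, winv], fun b => by rw [h6, h3, winv]⟩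

lemma invSet_eq {m l : ℕ} (hm : 1 ≤ m) (hl : 1 ≤ l) {θ : Set (Cyl m l)}
    (hθ : IsCylindric m l θ) {e : ℕ → Cyl m l} (he : IsTableau m l θ e) (n : ℕ) :
    invSet (m + l) (wordProd (m + l) (tabWord m l e n)) = hk m l θ '' (e '' Set.Icc 1 n) := by
  have hκ : 2 ≤ m + l := by omega
  have : NeZero (m + l) := ⟨by omega⟩
  obtain ⟨lam, mu, h⟩ := exists_rep hm hl hθ
  obtain ⟨lam', mu', h', hv, hu⟩ := exists_rep_remain hm hl hθ he h n
  ext β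
  constructor
  · rintro ⟨hβ, γ, hγ, rfl⟩
    obtain ⟨p, q, hpq, hγ'⟩ := exists_rt_of_mem_Rpos _ hκ hγ
    obtain ⟨v, rfl⟩ := winv_surj hκ e n p
    obtain ⟨u, rfl⟩ := winv_surj hκ e n q
    have hγ2 : γ = rt (m + l) (winv m l e n u) (winv m l e n v) := by
      rw [← rt_neg, ← hγ', neg_neg]
    rw [hγ2, wordProd_winv hκ] at hβ ⊢
    have huv : u ≤ v := by
      by_contra hlt
      exact rt_notMem_QPos _ (by omega) hβ.2
    have huv' : u ≠ v := by
      rintro rfl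
      exact lt_irrefl _ hpq
    -- `u < v` is an inversion; only a column label followed by a row label can be one
    rcases h.label_cases u with ⟨a, rfl⟩ | ⟨b, rfl⟩ <;>
      rcases h.label_cases v with ⟨a', rfl⟩ | ⟨b', rfl⟩
    · rw [← hv, ← hv] at hpq
      rcases lt_or_ge a a' with h1 | h1
      · have := h.lam_anti h1.le
        omega
      · have := h'.lam_anti h1
        have : a = a' := by omega
        subst this
        exact absurd rfl huv'
    · rw [← hv, ← hu] at hpq
      have h1 : pr m l (a, b') ∉ θ := by rw [h.mem_iff]; omega
      have h2 : pr m l (a, b') ∈ remain m l θ e n := by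
        rw [h'.mem_iff]
        have := h'.ne a b'
        omega
      exact absurd h2.1 h1
    · rw [← hv, ← hu] at hpq
      have h1 : pr m l (a', b) ∈ θ := by rw [h.mem_iff]; omega
      have h2 : pr m l (a', b) ∉ remain m l θ e n := by rw [h'.mem_iff]; omega
      refine ⟨pr m l (a', b), ?_, hk_eq hm hl h h1⟩
      by_contra h3
      exact h2 ⟨h1, h3⟩
    · rw [← hu, ← hu] at hpq
      rcases lt_or_ge b' b with h1 | h1
      · have := h.mu_anti h1.le
        omega
      · have := h'.mu_anti h1
        have : b = b' := by omega
        subst this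
        exact absurd rfl huv'
  · rintro ⟨x, hx, rfl⟩
    have hxθ : x ∈ θ := by
      obtain ⟨k, hk1, rfl⟩ := hx
      exact he.mem hk1.1
    obtain ⟨a, b, rfl⟩ := pr_surj m l x
    rw [hk_eq hm hl h hxθ]
    refine ⟨rt_mem_Rpos _ hκ ((h.mem_iff _ _).1 hxθ) (h.not_congr _ _), ?_⟩
    refine ⟨_, ?_, wordProd_winv hκ e n _ _⟩
    have h1 : pr m l (a, b) ∉ remain m l θ e n := fun h2 => h2.2 hx
    rw [h'.mem_iff] at h1
    have h2 := h'.ne a b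
    rw [← hu, ← hv, Rneg, Set.mem_ofPred_eq, rt_neg]
    exact rt_mem_Rpos _ hκ (by omega) (h'.not_congr _ _).symm

/-! ### The weight `P_θ` -/

section Weight

variable {m l : ℕ} {θ : Set (Cyl m l)}

lemma isBottomCell_of (hθ : IsCylindric m l θ) {a b : ℤ} (h1 : pr m l (a, b) ∈ θ)
    (h2 : pr m l (a + 1, b + 1) ∉ θ) : IsBottomCell m l θ ((b - a : ℤ)) (pr m l (a, b)) := by
  refine ⟨h1, rfl, fun y hy hc => ?_⟩
  obtain ⟨c, d, rfl, hcd⟩ := exists_lift_content m l y _ hc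
  have hca : c ≤ a := by
    by_contra hlt
    exact h2 (hθ.mem_of_le hy (by omega) (by omega))
  exact (cle_pr_iff ..).2 ⟨0, by omega, by omega⟩

lemma cle_diag (hm : 1 ≤ m) (hl : 1 ≤ l) {a b c d : ℤ} (h : cle m l (pr m l (a, b)) (pr m l (c, d)))
    (hd : d - c = b - a) : c ≤ a := by
  obtain ⟨j, h1, h2⟩ := (cle_pr_iff ..).1 h
  have hm' : (1 : ℤ) ≤ m := by exact_mod_cast hm
  have hl' : (1 : ℤ) ≤ l := by exact_mod_cast hl
  rcases le_or_gt 0 j with h3 | h3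
  · nlinarith
  · nlinarith

lemma isBottomCell_iff (hm : 1 ≤ m) (hl : 1 ≤ l) (hθ : IsCylindric m l θ) {a b : ℤ}
    (h1 : pr m l (a, b) ∈ θ) (h2 : pr m l (a + 1, b + 1) ∉ θ) (x : Cyl m l) :
    IsBottomCell m l θ ((b - a : ℤ)) x ↔ x = pr m l (a, b) := by
  constructor
  · rintro ⟨hx, hc, hle⟩
    obtain ⟨c, d, rfl, hcd⟩ := exists_lift_content m l x _ hc
    have h3 := cle_diag hm hl (hle _ h1 rfl) (by omega)
    have h4 := cle_diag hm hl ((isBottomCell_of hθ h1 h2).2.2 _ hx hc) (by omega)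
    rw [show c = a by omega, show d = b by omega]
  · rintro rfl
    exact isBottomCell_of hθ h1 h2

lemma mem_btm_iff (hm : 1 ≤ m) (hl : 1 ≤ l) (hθ : IsCylindric m l θ) (a b : ℤ) :
    pr m l (a, b) ∈ btm m l θ ↔ pr m l (a, b) ∈ θ ∧ pr m l (a + 1, b + 1) ∉ θ := by
  constructor
  · rintro ⟨i, h1, h2, h3⟩
    refine ⟨h1, fun h4 => ?_⟩
    have := cle_diag hm hl (h3 _ h4 (by rw [← h2, con_pr, con_pr]; congr 1; ring)) (by omega)
    omega
  · rintro ⟨h1, h2⟩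
    exact ⟨_, isBottomCell_of hθ h1 h2⟩

/-- A bottom cell is maximal in the bottom set exactly when both
`(a + 1, b)` and `(a, b + 1)` are in `θ`. -/
lemma mem_btmMax_iff (hm : 1 ≤ m) (hl : 1 ≤ l) (hθ : IsCylindric m l θ) {a b : ℤ}
    (h1 : pr m l (a, b) ∈ θ) (h2 : pr m l (a + 1, b + 1) ∉ θ) :
    pr m l (a, b) ∈ btmMax m l θ ↔ pr m l (a + 1, b) ∈ θ ∧ pr m l (a, b + 1) ∈ θ := by
  constructor
  · rintro ⟨-, hmax⟩
    constructor
    · by_contra h3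
      refine (pr_ne_of_succ hm hl (show b - a = (b - 1) - a + 1 by ring)).symm
        (hmax (pr m l (a, b - 1)) ?_ ((cle_pr_iff ..).2 ⟨0, by omega, by omega⟩))
      rw [mem_btm_iff hm hl hθ, sub_add_cancel]
      exact ⟨hθ.mem_of_le h1 le_rfl (by omega), h3⟩
    · by_contra h3
      refine (pr_ne_of_succ hm hl (show b - (a - 1) = b - a + 1 by ring))
        (hmax (pr m l (a - 1, b)) ?_ ((cle_pr_iff ..).2 ⟨0, by omega, by omega⟩))
      rw [mem_btm_iff hm hl hθ, sub_add_cancel]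
      exact ⟨hθ.mem_of_le h1 (by omega) le_rfl, h3⟩
  · rintro ⟨h3, h4⟩
    refine ⟨(mem_btm_iff hm hl hθ _ _).2 ⟨h1, h2⟩, fun y hy hle => ?_⟩
    obtain ⟨c, d, rfl⟩ := pr_surj m l y
    obtain ⟨j, hc, hd⟩ := (cle_pr_iff ..).1 hle
    rw [← pr_shift m l c d j] at hy ⊢
    generalize c + j * m = c at *
    generalize d - j * l = d at *
    have h5 := ((mem_btm_iff hm hl hθ _ _).1 hy).2
    have h6 : c = a := by
      by_contra hne
      exact h5 (hθ.mem_of_le h4 (by omega) (by omega))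
    have h7 : d = b := by
      by_contra hne
      exact h5 (hθ.mem_of_le h3 (by omega) (by omega))
    rw [h6, h7]

/-- A bottom cell is minimal in the bottom set exactly when neither
`(a + 1, b)` nor `(a, b + 1)` is in `θ`. -/
lemma mem_btmMin_iff (hm : 1 ≤ m) (hl : 1 ≤ l) (hθ : IsCylindric m l θ) {a b : ℤ}
    (h1 : pr m l (a, b) ∈ θ) (h2 : pr m l (a + 1, b + 1) ∉ θ) :
    pr m l (a, b) ∈ btmMin m l θ ↔ pr m l (a + 1, b) ∉ θ ∧ pr m l (a, b + 1) ∉ θ := by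
  constructor
  · rintro ⟨-, hmin⟩
    constructor
    · intro h3
      refine (pr_ne_of_succ hm hl (show b - a = b - (a + 1) + 1 by ring)).symm
        (hmin (pr m l (a + 1, b)) ?_ ((cle_pr_iff ..).2 ⟨0, by omega, by omega⟩))
      rw [mem_btm_iff hm hl hθ]
      exact ⟨h3, fun h4 => h2 (hθ.mem_of_le h4 (by omega) le_rfl)⟩
    · intro h3
      refine (pr_ne_of_succ hm hl (show b + 1 - a = b - a + 1 by ring))
        (hmin (pr m l (a, b + 1)) ?_ ((cle_pr_iff ..).2 ⟨0, by omega, by omega⟩))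
      rw [mem_btm_iff hm hl hθ]
      exact ⟨h3, fun h4 => h2 (hθ.mem_of_le h4 le_rfl (by omega))⟩
  · rintro ⟨h3, h4⟩
    refine ⟨(mem_btm_iff hm hl hθ _ _).2 ⟨h1, h2⟩, fun y hy hle => ?_⟩
    obtain ⟨c, d, rfl⟩ := pr_surj m l y
    obtain ⟨j, hc, hd⟩ := (cle_pr_iff ..).1 hle
    rw [← pr_shift m l c d (-j)] at hy ⊢
    have hc' : a ≤ c + -j * m := by linarith
    have hd' : b ≤ d - -j * l := by linarith
    generalize c + -j * m = c at *
    generalize d - -j * l = d at *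
    have h5 := ((mem_btm_iff hm hl hθ _ _).1 hy).1
    have h6 : c = a := by
      by_contra hne
      exact h3 (hθ.mem_of_le h5 (by omega) (by omega))
    have h7 : d = b := by
      by_contra hne
      exact h4 (hθ.mem_of_le h5 (by omega) (by omega))
    rw [h6, h7]

open Classical in
/-- The indicator function of the set of row labels. -/
noncomputable def rowInd (lam : ℤ → ℤ) (t : ℤ) : ℚ := if ∃ a, t = lam a - a + 1 then 1 else 0

variable {lam mu : ℤ → ℤ}

lemma rowInd_row (lam : ℤ → ℤ) (a : ℤ) : rowInd lam (lam a - a + 1) = 1 := if_pos ⟨a, rfl⟩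

lemma rowInd_col (h : Rep m l θ lam mu) (b : ℤ) : rowInd lam (b - mu b) = 0 :=
  if_neg (by rintro ⟨a, ha⟩; exact h.ne a b ha)

/-- The coefficients of `P_θ` are the successive differences of the indicator of the row labels. -/
lemma aC_eq (hm : 1 ≤ m) (hl : 1 ≤ l) (hθ : IsCylindric m l θ) (h : Rep m l θ lam mu) (t : ℤ) :
    aC m l θ (t : ZMod (m + l)) = rowInd lam t - rowInd lam (t + 1) := by
  classical
  obtain ⟨a, b, rfl, h1, h2⟩ := h.exists_bottom t
  obtain ⟨l1, l2, l3, l4⟩ := h.bottom_label h1 h2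
  have e1 : rowInd lam (b - a) = if pr m l (a + 1, b) ∈ θ then 1 else 0 := by
    split_ifs with h3
    · have := rowInd_row lam (a + 1)
      rwa [l1 h3, show b - (a + 1) + 1 = b - a by ring] at this
    · have := rowInd_col h b
      rwa [l2 h3] at this
  have e2 : rowInd lam (b - a + 1) = if pr m l (a, b + 1) ∈ θ then 0 else 1 := by
    split_ifs with h3
    · have := rowInd_col h (b + 1)
      rwa [l3 h3, show b + 1 - a = b - a + 1 by ring] at this
    · have := rowInd_row lam a
      rwa [l4 h3] at this
  have e3 : (∃ x, IsBottomCell m l θ ((b - a : ℤ) : ZMod (m + l)) x ∧ x ∈ btmMax m l θ) ↔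
      pr m l (a + 1, b) ∈ θ ∧ pr m l (a, b + 1) ∈ θ := by
    simp only [isBottomCell_iff hm hl hθ h1 h2, exists_eq_left, mem_btmMax_iff hm hl hθ h1 h2]
  have e4 : (∃ x, IsBottomCell m l θ ((b - a : ℤ) : ZMod (m + l)) x ∧ x ∈ btmMin m l θ) ↔
      pr m l (a + 1, b) ∉ θ ∧ pr m l (a, b + 1) ∉ θ := by
    simp only [isBottomCell_iff hm hl hθ h1 h2, exists_eq_left, mem_btmMin_iff hm hl hθ h1 h2]
  simp only [aC, e3, e4, e1, e2]
  by_cases h3 : pr m l (a + 1, b) ∈ θ <;> by_cases h4 : pr m l (a, b + 1) ∈ θ <;> simp [h3, h4]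

lemma pairP_add [NeZero (m + l)] (x y : Hw (m + l)) :
    pairP m l θ (x + y) = pairP m l θ x + pairP m l θ y := by
  simp only [pairP, finsum_eq_sum_of_fintype, Prod.fst_add, Pi.add_apply, mul_add,
    Finset.sum_add_distrib]

lemma pairP_alpha [NeZero (m + l)] (i : ZMod (m + l)) :
    pairP m l θ (alphaR (m + l) i) = aC m l θ i := by
  simp [pairP, finsum_eq_sum_of_fintype, alphaR, Pi.single_apply]

lemma pairP_rt (hm : 1 ≤ m) (hl : 1 ≤ l) (hθ : IsCylindric m l θ) (h : Rep m l θ lam mu)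
    {u v : ℤ} (huv : u ≤ v) :
    pairP m l θ (rt (m + l) u v) = rowInd lam u - rowInd lam v := by
  have : NeZero (m + l) := ⟨by omega⟩
  induction v, huv using Int.leInduction with
  | base => simp [rt, pairP]
  | succ v _ ih =>
    have : rt (m + l) u (v + 1) = rt (m + l) u v + alphaR (m + l) (v : ZMod (m + l)) := by
      rw [rt, rt, eps_succ]
      abel
    rw [this, pairP_add, pairP_alpha, ih, aC_eq hm hl hθ h]
    ring

lemma hk_image_eq_DSet (hm : 1 ≤ m) (hl : 1 ≤ l) (hθ : IsCylindric m l θ) :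
    hk m l θ '' θ = DSet m l θ := by
  have hκ : 2 ≤ m + l := by omega
  have : NeZero (m + l) := ⟨by omega⟩
  obtain ⟨lam, mu, h⟩ := exists_rep hm hl hθ
  ext β
  constructor
  · rintro ⟨x, hx, rfl⟩
    obtain ⟨a, b, rfl⟩ := pr_surj m l x
    have hlt := (h.mem_iff _ _).1 hx
    rw [hk_eq hm hl h hx]
    refine ⟨rt_mem_Rpos _ hκ hlt (h.not_congr _ _), ?_⟩
    rw [pairP_rt hm hl hθ h hlt.le, rowInd_row, rowInd_col h]
    norm_num
  · rintro ⟨hβ, hP⟩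
    obtain ⟨u, v, huv, rfl⟩ := exists_rt_of_mem_Rpos _ hκ hβ
    rw [pairP_rt hm hl hθ h huv.le] at hP
    rcases h.label_cases u with ⟨a, rfl⟩ | ⟨b, rfl⟩ <;>
      rcases h.label_cases v with ⟨a', rfl⟩ | ⟨b', rfl⟩
    · rw [rowInd_row, rowInd_row] at hP
      norm_num at hP
    · rw [rowInd_row, rowInd_col h] at hP
      norm_num at hP
    · have hx := (h.mem_iff _ _).2 huv
      exact ⟨_, hx, hk_eq hm hl h hx⟩
    · rw [rowInd_col h, rowInd_col h] at hP
      norm_num at hP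

end Weight

/-- Proposition 2.12: R(w_{θ,T}[n]) = {hk(x) : x ∈ T⁻¹({1,…,n})}; consequently
⋃_{n≥1} R(w_{θ,T}[n]) = {hk(x) : x ∈ θ} = D(P_θ), independently of T. -/
theorem statement_8 (m l : ℕ) (hm : 1 ≤ m) (hl : 1 ≤ l)
    (θ : Set (Cyl m l)) (hθ : IsCylindric m l θ)
    (e : ℕ → Cyl m l) (he : IsTableau m l θ e) :
    (∀ n : ℕ, 1 ≤ n →
      invSet (m + l) (wordProd (m + l) (tabWord m l e n)) =
        hk m l θ '' (e '' Set.Icc 1 n)) ∧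
    (⋃ n ∈ {n : ℕ | 1 ≤ n},
        invSet (m + l) (wordProd (m + l) (tabWord m l e n))) = hk m l θ '' θ ∧
    hk m l θ '' θ = DSet m l θ := by
  refine ⟨fun n _ => invSet_eq hm hl hθ he n, ?_, hk_image_eq_DSet hm hl hθ⟩
  simp only [invSet_eq hm hl hθ he]
  ext β
  constructor
  · intro h
    obtain ⟨n, -, x, ⟨k, hk1, rfl⟩, rfl⟩ := Set.mem_iUnion₂.1 h
    exact ⟨e k, he.mem hk1.1, rfl⟩
  · rintro ⟨x, hx, rfl⟩
    rw [← he.2.1] at hx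
    obtain ⟨k, hk1, rfl⟩ := hx
    exact Set.mem_iUnion₂.2 ⟨k, hk1, _, ⟨k, ⟨hk1, le_rfl⟩, rfl⟩, rfl⟩

end CylPaper
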